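/- Programs Ω₁ and Ω₂ with weight constraints are strongly equivalent if and only if their translations [Ω₁] and [Ω₂] are strongly equivalent as programs with nested expressions. -/

import Mathlib

open Classical

/-- A literal: a propositional atom `a` or its classical negation `¬ a`. -/
inductive Lit (α : Type) where
  | pos : α → Lit α
  | neg : α → Lit α

/-- The atom of a literal. -/
def Lit.atom {α : Type} : Lit α → α
  | .pos a => a
  | .neg a => a

/-- Mapping literals along a map of atoms. -/
def Lit.map {α β : Type} (f : α → β) : Lit α → Lit β
  | .pos a => .pos (f a)
  | .neg a => .neg (f a)

/-- A set of literals is consistent if it contains no pair `a`, `¬ a`. -/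
def LitConsistent {α : Type} (Z : Set (Lit α)) : Prop :=
  ∀ a : α, ¬(Lit.pos a ∈ Z ∧ Lit.neg a ∈ Z)

/-- Formulas (nested expressions): elementary formulas are literals, `⊥` and `⊤`;
formulas are built from them using negation as failure `naf`, conjunction `conj`
and disjunction `disj`. -/
inductive Formula (α : Type) where
  | lit : Lit α → Formula α
  | fbot : Formula α
  | ftop : Formula α
  | naf : Formula α → Formula α
  | conj : Formula α → Formula α → Formula α
  | disj : Formula α → Formula α → Formula α

/-- Satisfaction of a formula by a set of literals. -/
def Formula.sat {α : Type} (Z : Set (Lit α)) : Formula α → Prop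
  | .lit l => l ∈ Z
  | .fbot => False
  | .ftop => True
  | .naf F => ¬ F.sat Z
  | .conj F G => F.sat Z ∧ G.sat Z
  | .disj F G => F.sat Z ∨ G.sat Z

/-- A rule with nested expressions: `head ← body`. -/
structure NRule (α : Type) where
  head : Formula α
  body : Formula α

/-- `Z` satisfies a program (a set of rules). -/
def progSat {α : Type} (Z : Set (Lit α)) (P : Set (NRule α)) : Prop :=
  ∀ r ∈ P, r.body.sat Z → r.head.sat Z

/-- The reduct `F^Z` of a formula relative to a set of literals `Z`. -/
noncomputable def Formula.reduct {α : Type} (Z : Set (Lit α)) : Formula α → Formula α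
  | .lit l => .lit l
  | .fbot => .fbot
  | .ftop => .ftop
  | .naf F => if F.sat Z then .fbot else .ftop
  | .conj F G => .conj (F.reduct Z) (G.reduct Z)
  | .disj F G => .disj (F.reduct Z) (G.reduct Z)

/-- The reduct `Π^Z` of a program. -/
noncomputable def progReduct {α : Type} (Z : Set (Lit α)) (P : Set (NRule α)) : Set (NRule α) :=
  (fun r : NRule α => NRule.mk (r.head.reduct Z) (r.body.reduct Z)) '' P

/-- `Z` is minimal (under inclusion) among the consistent sets of literals satisfying `P`. -/
def MinimalSat {α : Type} (Z : Set (Lit α)) (P : Set (NRule α)) : Prop :=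
  LitConsistent Z ∧ progSat Z P ∧
    ∀ Z' : Set (Lit α), LitConsistent Z' → progSat Z' P → Z' ⊆ Z → Z' = Z

/-- `Z` is an answer set for a program `P` with nested expressions:
`Z` is minimal among the consistent sets satisfying the reduct `P^Z`. -/
def AnswerSet {α : Type} (Z : Set (Lit α)) (P : Set (NRule α)) : Prop :=
  MinimalSat Z (progReduct Z P)

/-- Strong equivalence of programs with nested expressions. -/
def StrongEq {α : Type} (P₁ P₂ : Set (NRule α)) : Prop :=
  ∀ P : Set (NRule α), ∀ Z : Set (Lit α), AnswerSet Z (P₁ ∪ P) ↔ AnswerSet Z (P₂ ∪ P)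

/-- Multiple conjunction (the empty conjunction is `⊤`). -/
def bigConj {α : Type} : List (Formula α) → Formula α
  | [] => .ftop
  | F :: Fs => .conj F (bigConj Fs)

/-- Multiple disjunction (the empty disjunction is `⊥`). -/
def bigDisj {α : Type} : List (Formula α) → Formula α
  | [] => .fbot
  | F :: Fs => .disj F (bigDisj Fs)

/-- `⟨F₁,…,F_n⟩:X`: the disjunction over `I ∈ X` of the conjunctions of the `Fᵢ`, `i ∈ I`. -/
noncomputable def angled {α : Type} {n : ℕ} (F : Fin n → Formula α) (X : Finset (Finset (Fin n))) :
    Formula α :=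
  bigDisj (X.toList.map fun I => bigConj (I.toList.map F))
/-- A rule element: a literal (positive rule element) or a literal
prefixed with negation as failure (negative rule element). -/
inductive RElem (α : Type) where
  | pos : Lit α → RElem α
  | neg : Lit α → RElem α

/-- Satisfaction of a rule element by a set of literals. -/
def RElem.sat {α : Type} (Z : Set (Lit α)) : RElem α → Prop
  | .pos l => l ∈ Z
  | .neg l => l ∉ Z

/-- Whether a rule element is negative. -/
def RElem.isNegB {α : Type} : RElem α → Bool
  | .pos _ => false
  | .neg _ => true

/-- The sum of the weights of the entries of `S` that are satisfied by `Z`. -/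
noncomputable def weightSum {α : Type} (Z : Set (Lit α)) (S : List (RElem α × ℝ)) : ℝ :=
  (S.map fun p => if p.1.sat Z then p.2 else 0).sum

/-- A weight constraint `L ≤ {c₁=w₁,…,c_m=w_m} ≤ U` with nonnegative weights;
`L` and `U` may be `−∞`/`+∞`. -/
structure WConstraint (α : Type) where
  L : EReal
  S : List (RElem α × ℝ)
  U : EReal
  nonneg : ∀ p ∈ S, (0 : ℝ) ≤ p.2

/-- `Z` satisfies the weight constraint `L ≤ S ≤ U`. -/
def WConstraint.sat {α : Type} (Z : Set (Lit α)) (C : WConstraint α) : Prop :=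
  C.L ≤ (weightSum Z C.S : EReal) ∧ (weightSum Z C.S : EReal) ≤ C.U

/-- A rule with weight constraints, `C₀ ← C₁,…,C_n`. -/
structure WRule (α : Type) where
  head : WConstraint α
  body : List (WConstraint α)

/-- `Z` satisfies a program with weight constraints. -/
def wProgSat {α : Type} (Z : Set (Lit α)) (Ω : Set (WRule α)) : Prop :=
  ∀ R ∈ Ω, (∀ C ∈ R.body, C.sat Z) → R.head.sat Z

/-- A weight constraint of the form `L ≤ S` (no upper bound), with nonnegative weights. -/
structure LConstraint (α : Type) where
  L : EReal
  S : List (RElem α × ℝ)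
  nonneg : ∀ p ∈ S, (0 : ℝ) ≤ p.2

/-- Satisfaction of a lower-bound constraint (by an arbitrary set of literals). -/
def LConstraint.sat {α : Type} (Z : Set (Lit α)) (C : LConstraint α) : Prop :=
  C.L ≤ (weightSum Z C.S : EReal)

/-- A Horn rule: a literal as head, lower-bound constraints as body. -/
structure HornRule (α : Type) where
  head : Lit α
  body : List (LConstraint α)

/-- Satisfaction of a set of Horn rules by an arbitrary set of literals. -/
def hornSat {α : Type} (Z : Set (Lit α)) (P : Set (HornRule α)) : Prop :=
  ∀ r ∈ P, (∀ C ∈ r.body, C.sat Z) → r.head ∈ Z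

/-- The deductive closure of a set of Horn rules: its unique minimal satisfying
set of literals (the intersection of all satisfying sets). -/
def cl {α : Type} (P : Set (HornRule α)) : Set (Lit α) :=
  ⋂₀ {Z : Set (Lit α) | hornSat Z P}

/-- The sum of the weights of the negative entries of `S` satisfied by `Z`. -/
noncomputable def negSatWeight {α : Type} (Z : Set (Lit α)) (S : List (RElem α × ℝ)) : ℝ :=
  (S.map fun p => if p.1.isNegB = true ∧ p.1.sat Z then p.2 else 0).sum

/-- The reduct `(L ≤ S)^Z` of a lower-bound constraint: drop the negative entries
of `S` and decrease `L` by the total weight of the negative entries satisfied by `Z`. -/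
noncomputable def LConstraint.reduct {α : Type} (Z : Set (Lit α)) (C : LConstraint α) :
    LConstraint α :=
  ⟨C.L - ((negSatWeight Z C.S : ℝ) : EReal),
   C.S.filter (fun p => !p.1.isNegB),
   fun p hp => C.nonneg p (List.mem_of_mem_filter hp)⟩

/-- The lower-bound part `L ≤ S` of a weight constraint `L ≤ S ≤ U`. -/
def WConstraint.lower {α : Type} (C : WConstraint α) : LConstraint α :=
  ⟨C.L, C.S, C.nonneg⟩

/-- The positive rule elements (as literals) occurring in `S`. -/
def posElems {α : Type} (S : List (RElem α × ℝ)) : Set (Lit α) :=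
  {l : Lit α | ∃ w : ℝ, (RElem.pos l, w) ∈ S}

/-- The reduct `Ω^Z` of a program with weight constraints: for each rule
`L₀≤S₀≤U₀ ← C₁,…,C_n` whose upper bounds are all satisfied by `Z`, the Horn rules
`l ← C₁^Z,…,C_n^Z` for all positive rule elements `l` of `S₀` with `l ∈ Z`. -/
noncomputable def wProgReduct {α : Type} (Z : Set (Lit α)) (Ω : Set (WRule α)) :
    Set (HornRule α) :=
  { r : HornRule α | ∃ R ∈ Ω,
      (∀ C ∈ R.body, (weightSum Z C.S : EReal) ≤ C.U) ∧
      r.head ∈ posElems R.head.S ∧ r.head ∈ Z ∧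
      r.body = R.body.map (fun C => C.lower.reduct Z) }

/-- `Z` is an answer set for the program `Ω` with weight constraints. -/
def WAnswerSet {α : Type} (Z : Set (Lit α)) (Ω : Set (WRule α)) : Prop :=
  LitConsistent Z ∧ wProgSat Z Ω ∧ cl (wProgReduct Z Ω) = Z

/-- Strong equivalence of programs with weight constraints. -/
def WStrongEq {α : Type} (Ω₁ Ω₂ : Set (WRule α)) : Prop :=
  ∀ Ω : Set (WRule α), ∀ Z : Set (Lit α), WAnswerSet Z (Ω₁ ∪ Ω) ↔ WAnswerSet Z (Ω₂ ∪ Ω)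

/-- A rule element as a formula: `l` becomes the literal `l`, `not l` becomes `naf l`. -/
def RElem.toFormula {α : Type} : RElem α → Formula α
  | .pos l => .lit l
  | .neg l => .naf (.lit l)

/-- The translation `[L ≤ S]`: the formula `⟨c₁,…,c_m⟩:{I : L ≤ Σ_{i∈I} wᵢ}`. -/
noncomputable def trLower {α : Type} (L : EReal) (S : List (RElem α × ℝ)) : Formula α :=
  angled (fun i : Fin S.length => (S.get i).1.toFormula)
    (Finset.univ.filter fun I : Finset (Fin S.length) =>
      L ≤ ((∑ i ∈ I, (S.get i).2 : ℝ) : EReal))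

/-- The translation `[S ≤ U]`: the formula `not ⟨c₁,…,c_m⟩:{I : U < Σ_{i∈I} wᵢ}`. -/
noncomputable def trUpper {α : Type} (S : List (RElem α × ℝ)) (U : EReal) : Formula α :=
  .naf (angled (fun i : Fin S.length => (S.get i).1.toFormula)
    (Finset.univ.filter fun I : Finset (Fin S.length) =>
      U < ((∑ i ∈ I, (S.get i).2 : ℝ) : EReal)))

/-- The translation `[L ≤ S ≤ U] = [L ≤ S],[S ≤ U]`. -/
noncomputable def trWC {α : Type} (C : WConstraint α) : Formula α :=
  .conj (trLower C.L C.S) (trUpper C.S C.U)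

/-- The formulas `l ; not l` for the positive rule elements `l` of `S`, in order. -/
def choiceFmls {α : Type} (S : List (RElem α × ℝ)) : List (Formula α) :=
  S.filterMap fun p =>
    match p.1 with
    | RElem.pos l => some (Formula.disj (.lit l) (.naf (.lit l)))
    | RElem.neg _ => none

/-- The translation of a rule with weight constraints `C₀ ← C₁,…,C_n`:
`(l₁; not l₁),…,(l_p; not l_p),[C₀] ← [C₁],…,[C_n]`. -/
noncomputable def trRule {α : Type} (R : WRule α) : NRule α :=
  ⟨bigConj (choiceFmls R.head.S ++ [trWC R.head]), bigConj (R.body.map trWC)⟩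

/-- The translation `[Ω]` of a program with weight constraints. -/
noncomputable def trProg {α : Type} (Ω : Set (WRule α)) : Set (NRule α) :=
  trRule '' Ω

/-- The nondisjunctive translation `[Ω]^{nd}`: each rule `C₀ ← C₁,…,C_n` is replaced
by the rules `l ← not not l, [C₁],…,[C_n]` for all positive rule elements `l` of `C₀`
together with `⊥ ← not [C₀], [C₁],…,[C_n]`. -/
noncomputable def ndTrans {α : Type} (Ω : Set (WRule α)) : Set (NRule α) :=
  { r : NRule α | ∃ R ∈ Ω,
      (∃ l ∈ posElems R.head.S,
        r = ⟨.lit l, bigConj (.naf (.naf (.lit l)) :: R.body.map trWC)⟩) ∨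
      r = ⟨.fbot, bigConj (.naf (trWC R.head) :: R.body.map trWC)⟩ }

/-!
Both kinds of programs have SE-models: pairs `(Y, Z)` with `Z` consistent, `Y ⊆ Z`, such that `Z`
satisfies the program and `Y` satisfies its reduct relative to `Z`. In both cases the answer sets
are the sets `Z` for which `(Z, Z)` is the only SE-model with second component `Z`, and the
SE-models of a union are the common SE-models of its parts; hence equality of SE-models implies
strong equivalence. The translation preserves SE-models, so strong equivalence of the translations
restricts to strong equivalence of the programs with weight constraints. Conversely, if `Y ⊆ Z` and
`Z` is consistent, then adding the facts `l ←` for `l ∈ Y` and the rules `l ← x` for `l, x ∈ Z \ Y`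
leaves only `Y` and `Z` as candidates below `Z`. So strongly equivalent programs with weight
constraints have the same SE-models, and then so do their translations.
-/

section NestedExpressions

variable {α : Type} {Y Y' Z : Set (Lit α)}

theorem LitConsistent.mono (hZ : LitConsistent Z) (hYZ : Y ⊆ Z) : LitConsistent Y :=
  fun a ha => hZ a ⟨hYZ ha.1, hYZ ha.2⟩

theorem Formula.sat_reduct_naf (F : Formula α) : ((naf F).reduct Z).sat Y ↔ ¬ F.sat Z := by
  by_cases hF : F.sat Z <;> simp [reduct, sat, hF]

theorem Formula.sat_reduct_self (F : Formula α) : (F.reduct Z).sat Z ↔ F.sat Z := by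
  induction F with
  | lit | fbot | ftop => rfl
  | naf F => exact sat_reduct_naf F
  | conj F G ihF ihG => exact and_congr ihF ihG
  | disj F G ihF ihG => exact or_congr ihF ihG

theorem Formula.sat_reduct_mono (F : Formula α) (hY : Y ⊆ Y') (hF : (F.reduct Z).sat Y) :
    (F.reduct Z).sat Y' := by
  induction F with
  | lit => exact hY hF
  | fbot | ftop => exact hF
  | naf F => exact (sat_reduct_naf F).2 ((sat_reduct_naf F).1 hF)
  | conj F G ihF ihG => exact hF.imp ihF ihG
  | disj F G ihF ihG => exact hF.imp ihF ihG

theorem sat_bigConj {Fs : List (Formula α)} : (bigConj Fs).sat Z ↔ ∀ F ∈ Fs, F.sat Z := by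
  induction Fs with
  | nil => simp [bigConj, Formula.sat]
  | cons F Fs ih => simp [bigConj, Formula.sat, ih]

theorem sat_bigDisj {Fs : List (Formula α)} : (bigDisj Fs).sat Z ↔ ∃ F ∈ Fs, F.sat Z := by
  induction Fs with
  | nil => simp [bigDisj, Formula.sat]
  | cons F Fs ih => simp [bigDisj, Formula.sat, ih]

theorem reduct_bigConj (Fs : List (Formula α)) :
    (bigConj Fs).reduct Z = bigConj (Fs.map (Formula.reduct Z)) := by
  induction Fs with
  | nil => rfl
  | cons F Fs ih => simp only [bigConj, Formula.reduct, List.map_cons, ih]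

theorem reduct_bigDisj (Fs : List (Formula α)) :
    (bigDisj Fs).reduct Z = bigDisj (Fs.map (Formula.reduct Z)) := by
  induction Fs with
  | nil => rfl
  | cons F Fs ih => simp only [bigDisj, Formula.reduct, List.map_cons, ih]

theorem reduct_angled {n : ℕ} (F : Fin n → Formula α) (X : Finset (Finset (Fin n))) :
    (angled F X).reduct Z = angled (fun i => (F i).reduct Z) X := by
  simp only [angled, reduct_bigDisj, List.map_map, Function.comp_def, reduct_bigConj]

theorem sat_angled_of_isUpperSet {n : ℕ} {F : Fin n → Formula α} {X : Finset (Finset (Fin n))}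
    (hX : IsUpperSet (X : Set (Finset (Fin n)))) :
    (angled F X).sat Z ↔ Finset.univ.filter (fun i => (F i).sat Z) ∈ X := by
  have h_exists : (angled F X).sat Z ↔ ∃ I ∈ X, ∀ i ∈ I, (F i).sat Z := by
    simp [angled, sat_bigDisj, sat_bigConj]
  rw [h_exists]
  constructor
  · rintro ⟨I, hI, hsat⟩
    exact hX (fun i hi => (Finset.mem_filter_univ i).2 (hsat i hi)) hI
  · exact fun h => ⟨_, h, fun _ => (Finset.mem_filter_univ _).1⟩

theorem monotone_coe_sum {ι : Type*} {w : ι → ℝ} (hw : ∀ i, 0 ≤ w i) :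
    Monotone fun I : Finset ι => ((∑ i ∈ I, w i : ℝ) : EReal) :=
  EReal.coe_strictMono.monotone.comp (Finset.sum_mono_set_of_nonneg hw)

theorem sat_angled_le_sum {n : ℕ} {F : Fin n → Formula α} {w : Fin n → ℝ} (hw : ∀ i, 0 ≤ w i)
    {L : EReal} :
    (angled F (Finset.univ.filter fun I => L ≤ ((∑ i ∈ I, w i : ℝ) : EReal))).sat Z ↔
      L ≤ ((∑ i with (F i).sat Z, w i : ℝ) : EReal) := by
  refine (sat_angled_of_isUpperSet ?_).trans (Finset.mem_filter_univ _)
  rw [Finset.coe_filter_univ]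
  exact (isUpperSet_Ici L).preimage (monotone_coe_sum hw)

theorem sat_angled_lt_sum {n : ℕ} {F : Fin n → Formula α} {w : Fin n → ℝ} (hw : ∀ i, 0 ≤ w i)
    {U : EReal} :
    (angled F (Finset.univ.filter fun I => U < ((∑ i ∈ I, w i : ℝ) : EReal))).sat Z ↔
      U < ((∑ i with (F i).sat Z, w i : ℝ) : EReal) := by
  refine (sat_angled_of_isUpperSet ?_).trans (Finset.mem_filter_univ _)
  rw [Finset.coe_filter_univ]
  exact (isUpperSet_Ioi U).preimage (monotone_coe_sum hw)

theorem progSat_union {P Q : Set (NRule α)} :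
    progSat Z (P ∪ Q) ↔ progSat Z P ∧ progSat Z Q := by
  simp only [progSat, Set.mem_union, or_imp, forall_and]

theorem progSat_progReduct {P : Set (NRule α)} :
    progSat Y (progReduct Z P) ↔
      ∀ r ∈ P, (r.body.reduct Z).sat Y → (r.head.reduct Z).sat Y := by
  simp only [progSat, progReduct, Set.forall_mem_image]

theorem progSat_progReduct_self {P : Set (NRule α)} :
    progSat Z (progReduct Z P) ↔ progSat Z P := by
  rw [progSat_progReduct]
  simp only [Formula.sat_reduct_self, progSat]

/-- The pair `(Y, Z)` is an SE-model (strong equivalence model) of the program `P` with nested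
expressions. -/
def SEModel (P : Set (NRule α)) (Y Z : Set (Lit α)) : Prop :=
  LitConsistent Z ∧ Y ⊆ Z ∧ progSat Z P ∧ progSat Y (progReduct Z P)

theorem seModel_union {P Q : Set (NRule α)} :
    SEModel (P ∪ Q) Y Z ↔ SEModel P Y Z ∧ SEModel Q Y Z := by
  simp only [SEModel, progReduct, Set.image_union, progSat_union]
  tauto

theorem answerSet_iff_seModel {P : Set (NRule α)} :
    AnswerSet Z P ↔ SEModel P Z Z ∧ ∀ Y, SEModel P Y Z → Y = Z := by
  simp only [AnswerSet, MinimalSat, SEModel, progSat_progReduct_self]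
  constructor
  · rintro ⟨hZ, hP, hmin⟩
    exact ⟨⟨hZ, subset_rfl, hP, hP⟩, fun Y hY => hmin Y (hZ.mono hY.2.1) hY.2.2.2 hY.2.1⟩
  · rintro ⟨⟨hZ, -, hP, -⟩, hmin⟩
    exact ⟨hZ, hP, fun Y _ hYP hYZ => hmin Y ⟨hZ, hYZ, hP, hYP⟩⟩

theorem strongEq_of_seModel_iff {P₁ P₂ : Set (NRule α)}
    (h : ∀ Y Z, SEModel P₁ Y Z ↔ SEModel P₂ Y Z) : StrongEq P₁ P₂ := fun P Z => by
  simp only [answerSet_iff_seModel, seModel_union, h]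

end NestedExpressions

section HornRules

variable {α : Type}

theorem cl_subset {P : Set (HornRule α)} {Y : Set (Lit α)} (hY : hornSat Y P) : cl P ⊆ Y :=
  Set.sInter_subset_of_mem hY

theorem hornSat_cl {P : Set (HornRule α)}
    (hP : ∀ r ∈ P, ∀ C ∈ r.body, Monotone fun Z => C.sat Z) : hornSat (cl P) P :=
  fun r hr hbody _ hY => hY r hr fun C hC => hP r hr C hC (cl_subset hY) (hbody C hC)

end HornRules

section Translation

variable {α : Type} {Y Z : Set (Lit α)}

theorem RElem.sat_toFormula {c : RElem α} : c.toFormula.sat Z ↔ c.sat Z := by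
  cases c <;> rfl

theorem sum_filter_get {β M : Type*} [AddCommMonoid M] (S : List (β × M)) (q : β → Prop) :
    ∑ i : Fin S.length with q (S.get i).1, (S.get i).2 =
      (S.map fun p => if q p.1 then p.2 else 0).sum := by
  rw [Finset.sum_filter, ← Fin.sum_univ_fun_getElem]
  rfl

theorem sum_map_sat_reduct_toFormula (S : List (RElem α × ℝ)) :
    (S.map fun p => if (p.1.toFormula.reduct Z).sat Y then p.2 else 0).sum =
      weightSum Y (S.filter fun p => !p.1.isNegB) + negSatWeight Z S := by
  induction S with
  | nil => simp [weightSum, negSatWeight]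
  | cons p S ih =>
    obtain ⟨c, w⟩ := p
    rw [List.map_cons, List.sum_cons, ih]
    cases c with
    | pos l =>
      by_cases hl : l ∈ Y <;> simp [weightSum, negSatWeight, RElem.isNegB, RElem.toFormula,
        RElem.sat, Formula.reduct, Formula.sat, add_assoc, hl]
    | neg l =>
      simp [weightSum, negSatWeight, RElem.isNegB, RElem.toFormula, RElem.sat,
        Formula.sat_reduct_naf, Formula.sat, add_left_comm]

theorem sat_reduct_trLower (C : LConstraint α) :
    ((trLower C.L C.S).reduct Z).sat Y ↔ (C.reduct Z).sat Y := by
  rw [trLower, reduct_angled, sat_angled_le_sum fun i => C.nonneg _ (List.get_mem C.S i),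
    sum_filter_get C.S fun c => (c.toFormula.reduct Z).sat Y, sum_map_sat_reduct_toFormula,
    EReal.coe_add, LConstraint.sat, LConstraint.reduct,
    EReal.sub_le_iff_le_add (.inl (EReal.coe_ne_bot _)) (.inl (EReal.coe_ne_top _))]

theorem sat_trLower (C : LConstraint α) : (trLower C.L C.S).sat Z ↔ C.sat Z := by
  rw [trLower, sat_angled_le_sum fun i => C.nonneg _ (List.get_mem C.S i),
    sum_filter_get C.S fun c => c.toFormula.sat Z]
  simp only [RElem.sat_toFormula, LConstraint.sat, weightSum]

theorem sat_trUpper {S : List (RElem α × ℝ)} (hS : ∀ p ∈ S, (0 : ℝ) ≤ p.2) {U : EReal} :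
    (trUpper S U).sat Z ↔ (weightSum Z S : EReal) ≤ U := by
  rw [trUpper, Formula.sat, sat_angled_lt_sum fun i => hS _ (List.get_mem S i),
    sum_filter_get S fun c => c.toFormula.sat Z, not_lt]
  simp only [RElem.sat_toFormula, weightSum]

theorem sat_trWC (C : WConstraint α) : (trWC C).sat Z ↔ C.sat Z :=
  and_congr (sat_trLower C.lower) (sat_trUpper C.nonneg)

theorem sat_reduct_trWC (C : WConstraint α) :
    ((trWC C).reduct Z).sat Y ↔
      (C.lower.reduct Z).sat Y ∧ (weightSum Z C.S : EReal) ≤ C.U :=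
  and_congr (sat_reduct_trLower C.lower)
    ((Formula.sat_reduct_naf _).trans (sat_trUpper C.nonneg))

theorem LConstraint.monotone_sat_reduct (C : LConstraint α) :
    Monotone fun Y => (C.reduct Z).sat Y := fun _ _ hY hC =>
  (sat_reduct_trLower C).1 (Formula.sat_reduct_mono _ hY ((sat_reduct_trLower C).2 hC))

theorem LConstraint.sat_reduct_congr {C : LConstraint α} {Y' : Set (Lit α)}
    (h : ∀ l ∈ posElems C.S, l ∈ Y ↔ l ∈ Y') : (C.reduct Z).sat Y ↔ (C.reduct Z).sat Y' := by
  suffices weightSum Y (C.S.filter fun p => !p.1.isNegB) =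
      weightSum Y' (C.S.filter fun p => !p.1.isNegB) by
    simp only [LConstraint.sat, LConstraint.reduct, this]
  refine congrArg List.sum (List.map_congr_left fun p hp => ?_)
  obtain ⟨⟨l⟩ | ⟨l⟩, w⟩ := p
  · exact if_congr (h l ⟨w, (List.mem_filter.1 hp).1⟩) rfl rfl
  · simp [RElem.isNegB] at hp

theorem sat_reduct_choiceFmls {S : List (RElem α × ℝ)} :
    (∀ F ∈ choiceFmls S, (F.reduct Z).sat Y) ↔ ∀ l ∈ posElems S, l ∈ Z → l ∈ Y := by
  have sat_choice (l : Lit α) :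
      ((Formula.disj (.lit l) (.naf (.lit l))).reduct Z).sat Y ↔ (l ∈ Z → l ∈ Y) := by
    rw [Formula.reduct, Formula.sat, Formula.sat_reduct_naf, or_comm, ← imp_iff_not_or]
    rfl
  simp only [choiceFmls, List.mem_filterMap, posElems, Set.mem_ofPred_eq, ← sat_choice]
  constructor
  · rintro h l ⟨w, hw⟩
    exact h _ ⟨_, hw, rfl⟩
  · rintro h F ⟨⟨⟨l⟩ | ⟨l⟩, w⟩, hp, hF⟩
    · exact Option.some.inj hF ▸ h l ⟨w, hp⟩
    · cases hF

theorem progSat_progReduct_trProg {Ω : Set (WRule α)} :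
    progSat Y (progReduct Z (trProg Ω)) ↔
      ∀ R ∈ Ω, (∀ C ∈ R.body, ((trWC C).reduct Z).sat Y) →
        (∀ l ∈ posElems R.head.S, l ∈ Z → l ∈ Y) ∧ ((trWC R.head).reduct Z).sat Y := by
  simp only [progSat_progReduct, trProg, Set.forall_mem_image, trRule, reduct_bigConj, sat_bigConj,
    List.forall_mem_map, List.forall_mem_append, List.forall_mem_singleton, sat_reduct_choiceFmls]

theorem progSat_trProg {Ω : Set (WRule α)} : progSat Z (trProg Ω) ↔ wProgSat Z Ω := by
  rw [← progSat_progReduct_self, progSat_progReduct_trProg]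
  simp only [Formula.sat_reduct_self, sat_trWC, imp_self, implies_true, true_and, wProgSat]

theorem hornSat_wProgReduct {Ω : Set (WRule α)} :
    hornSat Y (wProgReduct Z Ω) ↔
      ∀ R ∈ Ω, (∀ C ∈ R.body, ((trWC C).reduct Z).sat Y) →
        ∀ l ∈ posElems R.head.S, l ∈ Z → l ∈ Y := by
  simp only [sat_reduct_trWC]
  constructor
  · intro h R hR hbody l hl hlZ
    exact h ⟨l, R.body.map fun C => C.lower.reduct Z⟩
      ⟨R, hR, fun C hC => (hbody C hC).2, hl, hlZ, rfl⟩
      (List.forall_mem_map.2 fun C hC => (hbody C hC).1)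
  · rintro h ⟨l, -⟩ ⟨R, hR, hU, hl, hlZ, rfl⟩ hbody
    exact h R hR (fun C hC => ⟨List.forall_mem_map.1 hbody C hC, hU C hC⟩) l hl hlZ

theorem hornSat_wProgReduct_iff_progSat {Ω : Set (WRule α)} (hYZ : Y ⊆ Z) (hΩ : wProgSat Z Ω) :
    hornSat Y (wProgReduct Z Ω) ↔ progSat Y (progReduct Z (trProg Ω)) := by
  rw [hornSat_wProgReduct, progSat_progReduct_trProg]
  refine forall₂_congr fun R hR => forall_congr' fun hbody => ?_
  have hhead : R.head.sat Z := hΩ R hR fun C hC =>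
    (sat_trWC C).1 ((Formula.sat_reduct_self _).1 (Formula.sat_reduct_mono _ hYZ (hbody C hC)))
  have hhead_reduct := (sat_reduct_trWC _).1
    ((Formula.sat_reduct_self _).2 ((sat_trWC R.head).2 hhead))
  -- Once the choices `lᵢ; not lᵢ` hold, `Y` and `Z` agree on the positive elements of the head, so
  -- the remaining part `[C₀]` of the head passes from `Z` to `Y`.
  refine (and_iff_left_of_imp fun hchoice => (sat_reduct_trWC _).2 ⟨?_, hhead_reduct.2⟩).symm
  exact (LConstraint.sat_reduct_congr fun l hl => ⟨(hYZ ·), hchoice l hl⟩).2 hhead_reduct.1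

end Translation

section SEModels

variable {α : Type} {Y Z : Set (Lit α)}

theorem hornSat_cl_wProgReduct (Ω : Set (WRule α)) :
    hornSat (cl (wProgReduct Z Ω)) (wProgReduct Z Ω) := by
  refine hornSat_cl ?_
  rintro ⟨l, -⟩ ⟨R, -, -, -, -, rfl⟩
  exact List.forall_mem_map.2 fun C _ => C.lower.monotone_sat_reduct

theorem hornSat_wProgReduct_self (Ω : Set (WRule α)) : hornSat Z (wProgReduct Z Ω) :=
  hornSat_wProgReduct.2 fun _ _ _ _ _ => id

/-- The pair `(Y, Z)` is an SE-model of the program `Ω` with weight constraints: the analogue of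
`SEModel`, with the reduct of weight constraints. -/
def WSEModel (Ω : Set (WRule α)) (Y Z : Set (Lit α)) : Prop :=
  LitConsistent Z ∧ Y ⊆ Z ∧ wProgSat Z Ω ∧ hornSat Y (wProgReduct Z Ω)

theorem WSEModel.total {Ω : Set (WRule α)} (h : WSEModel Ω Y Z) : WSEModel Ω Z Z :=
  ⟨h.1, subset_rfl, h.2.2.1, hornSat_wProgReduct_self Ω⟩

theorem wSEModel_union {Ω Ω' : Set (WRule α)} :
    WSEModel (Ω ∪ Ω') Y Z ↔ WSEModel Ω Y Z ∧ WSEModel Ω' Y Z := by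
  simp only [WSEModel, hornSat_wProgReduct, wProgSat, Set.mem_union, or_imp, forall_and]
  tauto

theorem wAnswerSet_iff_wSEModel {Ω : Set (WRule α)} :
    WAnswerSet Z Ω ↔ WSEModel Ω Z Z ∧ ∀ Y, WSEModel Ω Y Z → Y = Z := by
  constructor
  · rintro ⟨hZ, hΩ, hcl⟩
    refine ⟨⟨hZ, subset_rfl, hΩ, hornSat_wProgReduct_self Ω⟩, fun Y hY => ?_⟩
    exact hY.2.1.antisymm (hcl.symm.subset.trans (cl_subset hY.2.2.2))
  · rintro ⟨⟨hZ, -, hΩ, hhorn⟩, hmin⟩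
    exact ⟨hZ, hΩ, hmin _ ⟨hZ, cl_subset hhorn, hΩ, hornSat_cl_wProgReduct Ω⟩⟩

theorem seModel_trProg {Ω : Set (WRule α)} : SEModel (trProg Ω) Y Z ↔ WSEModel Ω Y Z := by
  simp only [SEModel, WSEModel, progSat_trProg]
  refine and_congr_right fun _ => and_congr_right fun hYZ => and_congr_right fun hΩ => ?_
  exact (hornSat_wProgReduct_iff_progSat hYZ hΩ).symm

theorem wAnswerSet_iff_answerSet_trProg {Ω : Set (WRule α)} :
    WAnswerSet Z Ω ↔ AnswerSet Z (trProg Ω) := by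
  simp only [wAnswerSet_iff_wSEModel, answerSet_iff_seModel, seModel_trProg]

theorem wStrongEq_of_strongEq_trProg {Ω₁ Ω₂ : Set (WRule α)}
    (h : StrongEq (trProg Ω₁) (trProg Ω₂)) : WStrongEq Ω₁ Ω₂ := fun Ω Z => by
  simpa only [wAnswerSet_iff_answerSet_trProg, trProg, Set.image_union] using h (trProg Ω) Z

end SEModels

section Separation

variable {α : Type} {X Y Z : Set (Lit α)}

/-- The literal `l` as the weight constraint `1 ≤ {l = 1}`. -/
noncomputable def litConstraint (l : Lit α) : WConstraint α :=
  ⟨1, [(RElem.pos l, 1)], ⊤, by simp⟩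

theorem sat_litConstraint {l : Lit α} : (litConstraint l).sat Z ↔ l ∈ Z := by
  by_cases hl : l ∈ Z <;> simp [WConstraint.sat, litConstraint, weightSum, RElem.sat, hl]

theorem sat_reduct_trWC_litConstraint {l : Lit α} :
    ((trWC (litConstraint l)).reduct Z).sat Y ↔ l ∈ Y := by
  by_cases hl : l ∈ Y <;> simp [sat_reduct_trWC, WConstraint.lower, LConstraint.reduct,
    LConstraint.sat, litConstraint, weightSum, negSatWeight, RElem.isNegB, RElem.sat, hl]

theorem posElems_litConstraint (l : Lit α) : posElems (litConstraint l).S = {l} := by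
  ext l'
  simp [posElems, litConstraint]

/-- The rule `l ← b₁, …, b_n`, all of whose constraints are literals, as a rule with weight
constraints. -/
noncomputable def litRule (l : Lit α) (b : List (Lit α)) : WRule α :=
  ⟨litConstraint l, b.map litConstraint⟩

/-- The facts `l ←` for `l ∈ Y` together with the rules `l ← x` for `l, x ∈ Z \ Y`: the context that
tells apart programs for which `(Y, Z)` is an SE-model from those for which it is not. -/
noncomputable def separatingProg (Y Z : Set (Lit α)) : Set (WRule α) :=
  (litRule · []) '' Y ∪ Set.image2 (litRule · [·]) (Z \ Y) (Z \ Y)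

theorem wProgSat_separatingProg (hYZ : Y ⊆ Z) : wProgSat Z (separatingProg Y Z) := by
  rintro _ (⟨l, hl, rfl⟩ | ⟨l, hl, x, -, rfl⟩) -
  · exact sat_litConstraint.2 (hYZ hl)
  · exact sat_litConstraint.2 hl.1

theorem hornSat_separatingProg (hYZ : Y ⊆ Z) :
    hornSat X (wProgReduct Z (separatingProg Y Z)) ↔
      Y ⊆ X ∧ ∀ l ∈ Z \ Y, ∀ x ∈ Z \ Y, x ∈ X → l ∈ X := by
  simp only [hornSat_wProgReduct, separatingProg, Set.mem_union, or_imp, forall_and,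
    Set.forall_mem_image, Set.forall_mem_image2, litRule, List.forall_mem_map,
    posElems_litConstraint, Set.mem_singleton_iff, forall_eq, sat_reduct_trWC_litConstraint,
    List.forall_mem_singleton]
  refine and_congr ⟨fun h l hl => h hl (List.forall_mem_nil _) (hYZ hl), fun h l hl _ _ => h hl⟩ ?_
  exact forall₅_congr fun l hl _ _ _ => forall_prop_of_true hl.1

theorem wSEModel_separatingProg (hZ : LitConsistent Z) (hYZ : Y ⊆ Z) :
    WSEModel (separatingProg Y Z) X Z ↔ X = Y ∨ X = Z := by
  simp only [WSEModel, hornSat_separatingProg hYZ]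
  constructor
  · rintro ⟨-, hXZ, -, hYX, hrules⟩
    refine or_iff_not_imp_left.2 fun hXY => hXZ.antisymm fun l hlZ => ?_
    obtain ⟨x, hxX, hxY⟩ := Set.not_subset.1 fun hXY' => hXY (hXY'.antisymm hYX)
    by_cases hlY : l ∈ Y
    · exact hYX hlY
    · exact hrules l ⟨hlZ, hlY⟩ x ⟨hXZ hxX, hxY⟩ hxX
  · rintro (rfl | rfl)
    · exact ⟨hZ, hYZ, wProgSat_separatingProg hYZ, subset_rfl, fun _ _ _ hx hxX => absurd hxX hx.2⟩
    · exact ⟨hZ, subset_rfl, wProgSat_separatingProg hYZ, hYZ, fun _ hl _ _ _ => hl.1⟩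

theorem wAnswerSet_union_separatingProg {Ω : Set (WRule α)} (hZ : LitConsistent Z) (hYZ : Y ⊆ Z) :
    WAnswerSet Z (Ω ∪ separatingProg Y Z) ↔ WSEModel Ω Z Z ∧ (WSEModel Ω Y Z → Y = Z) := by
  simp only [wAnswerSet_iff_wSEModel, wSEModel_union, wSEModel_separatingProg hZ hYZ]
  constructor
  · rintro ⟨⟨hΩ, -⟩, hmin⟩
    exact ⟨hΩ, fun hY => hmin Y ⟨hY, .inl rfl⟩⟩
  · rintro ⟨hΩ, hY⟩
    refine ⟨⟨hΩ, .inr trivial⟩, ?_⟩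
    rintro X ⟨hX, rfl | rfl⟩
    exacts [hY hX, rfl]

theorem WStrongEq.wSEModel_iff {Ω₁ Ω₂ : Set (WRule α)} (h : WStrongEq Ω₁ Ω₂) :
    WSEModel Ω₁ Y Z ↔ WSEModel Ω₂ Y Z := by
  by_cases hpair : LitConsistent Z ∧ Y ⊆ Z
  · obtain ⟨hZ, hYZ⟩ := hpair
    have htotal : WSEModel Ω₁ Z Z ↔ WSEModel Ω₂ Z Z := by
      simpa [wAnswerSet_union_separatingProg hZ subset_rfl] using h (separatingProg Z Z) Z
    have hproper := h (separatingProg Y Z) Z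
    rw [wAnswerSet_union_separatingProg hZ hYZ, wAnswerSet_union_separatingProg hZ hYZ] at hproper
    rcases eq_or_ne Y Z with rfl | hne
    · exact htotal
    · have htotal₁ : WSEModel Ω₁ Y Z → WSEModel Ω₁ Z Z := WSEModel.total
      have htotal₂ : WSEModel Ω₂ Y Z → WSEModel Ω₂ Z Z := WSEModel.total
      tauto
  · exact iff_of_false (fun hY => hpair ⟨hY.1, hY.2.1⟩) fun hY => hpair ⟨hY.1, hY.2.1⟩

end Separation

theorem strong_equiv_iff_translations_general {α : Type} (Ω₁ Ω₂ : Set (WRule α)) :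
    WStrongEq Ω₁ Ω₂ ↔ StrongEq (trProg Ω₁) (trProg Ω₂) := by
  refine ⟨fun h => strongEq_of_seModel_iff fun Y Z => ?_, wStrongEq_of_strongEq_trProg⟩
  rw [seModel_trProg, seModel_trProg, h.wSEModel_iff]

/-- Programs `Ω₁`, `Ω₂` with weight constraints are strongly equivalent iff their
translations `[Ω₁]`, `[Ω₂]` are strongly equivalent as programs with nested expressions. -/
theorem strong_equiv_iff_translations (Ω₁ Ω₂ : Set (WRule ℕ)) :
    WStrongEq Ω₁ Ω₂ ↔ StrongEq (trProg Ω₁) (trProg Ω₂) :=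
  strong_equiv_iff_translations_general Ω₁ Ω₂
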